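/- Let β and γ be real numbers with β + γ ≥ 1. Then for every graph G, the partition function Z_G is strictly positive. -/

import Mathlib

open scoped BigOperators

/-- A finite undirected multigraph (self-loops and parallel edges permitted),
with vertices `Fin n` and edges given as a multiset of (ordered representatives of)
unordered pairs of vertices.  Since the edge weight below is symmetric, the
orientation of each pair is immaterial. -/
structure MultiGraph where
  n : ℕ
  edges : Multiset (Fin n × Fin n)

/-- The edge interaction: `A₀₀ = β`, `A₀₁ = A₁₀ = 1`, `A₁₁ = γ`
(spin `false` = 0, spin `true` = 1). -/
def edgeW (β γ : ℝ) (i j : Bool) : ℝ :=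
  if i = j then (if i then γ else β) else 1

/-- The partition function with external fields `lam`. -/
def ZR (β γ : ℝ) (G : MultiGraph) (lam : Fin G.n → ℝ) : ℝ :=
  ∑ σ : Fin G.n → Bool,
    (G.edges.map fun e => edgeW β γ (σ e.1) (σ e.2)).prod *
      ∏ v, (if σ v then lam v else 1)

/-!
For `γ < 0` (the case `β < 0` is symmetric) put `a = γ / (1 - γ) ∈ (-1, 0)`, pin a vertex `v`, and
let `Z₀`, `Z₁` be the parts of the partition function with `v` in spin `0`, `1`. If all external
fields lie in `[a, 1]`, then `Z₀ > 0` and the ratio `Z₁ / Z₀` lies in `[a, 1]` again, by induction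
on the number of edges. A loop only rescales a field. For an edge `{v, u}`, write `F i j` for the
partition function without that edge and with `v`, `u` pinned to `i`, `j`. The induction hypothesis
applies to the graph without the edge: with root `v`, with root `v` and the field at `u` multiplied
by `a`, and with root `u` and the field at `v` multiplied by `a`. It also applies to the graph
contracted along the edge, whose pinned partition functions are `F 0 0` and `F 1 1`. A linear
combination of these bounds on the `F i j` is the bound for the graph with the edge. Since `a > -1`,
the total `Z₀ + Z₁` is positive.
-/

namespace TwoSpin

open Finset Function

/-! ### Sums over configurations -/

section Sums

variable {V M : Type*} [AddCommMonoid M]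

theorem sum_eq_sum_filter_false_add_true (S : Finset (V → Bool)) (f : (V → Bool) → M) (u : V) :
    ∑ σ ∈ S, f σ = ∑ σ ∈ S with σ u = false, f σ + ∑ σ ∈ S with σ u = true, f σ := by
  rw [← sum_filter_add_sum_filter_not S (fun σ => σ u = false)]
  simp only [Bool.not_eq_false]

theorem sum_filter_eq_sum_filter_update {α : Type*} [Fintype α] [DecidableEq α] [Fintype V]
    [DecidableEq V] (f : (V → α) → M) (u : V) (b c : α) :
    ∑ σ with σ u = b, f σ = ∑ σ with σ u = c, f (update σ u b) := by
  refine sum_nbij' (fun σ => update σ u c) (fun σ => update σ u b) ?_ ?_ ?_ ?_ ?_ <;>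
    intro σ hσ <;> obtain rfl := (mem_filter.mp hσ).2 <;> simp

end Sums

/-! ### Weights of configurations -/

section Weights

variable {V W : Type*} (β γ : ℝ)

/-- The interaction part of the weight of a configuration, for a multigraph with edges `E`. -/
def edgeWeight (E : Multiset (V × V)) (σ : V → Bool) : ℝ :=
  (E.map fun e => edgeW β γ (σ e.1) (σ e.2)).prod

/-- The external-field part of the weight of a configuration. -/
def fieldWeight [Fintype V] (l : V → ℝ) (σ : V → Bool) : ℝ :=
  ∏ v, if σ v then l v else 1

/-- The weight of a configuration, i.e. its term in the partition function. -/
def weight [Fintype V] (E : Multiset (V × V)) (l : V → ℝ) (σ : V → Bool) : ℝ :=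
  edgeWeight β γ E σ * fieldWeight l σ

theorem edgeW_comm (i j : Bool) : edgeW β γ i j = edgeW β γ j i := by
  cases i <;> cases j <;> rfl

theorem edgeW_not (i j : Bool) : edgeW β γ (!i) (!j) = edgeW γ β i j := by
  cases i <;> cases j <;> rfl

theorem edgeW_nonneg {β γ : ℝ} (hβ : 0 ≤ β) (hγ : 0 ≤ γ) (i j : Bool) : 0 ≤ edgeW β γ i j := by
  unfold edgeW
  split_ifs <;> first | assumption | exact zero_le_one

theorem edgeWeight_cons (e : V × V) (E : Multiset (V × V)) (σ : V → Bool) :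
    edgeWeight β γ (e ::ₘ E) σ = edgeW β γ (σ e.1) (σ e.2) * edgeWeight β γ E σ := by
  simp [edgeWeight]

theorem edgeWeight_map (f : V → W) (E : Multiset (V × V)) (σ : W → Bool) :
    edgeWeight β γ (E.map (Prod.map f f)) σ = edgeWeight β γ E (σ ∘ f) := by
  simp [edgeWeight, Multiset.map_map]

theorem edgeWeight_not (E : Multiset (V × V)) (σ : V → Bool) :
    edgeWeight β γ E (fun v => !σ v) = edgeWeight γ β E σ := by
  simp [edgeWeight, edgeW_not]

theorem edgeWeight_nonneg {β γ : ℝ} (hβ : 0 ≤ β) (hγ : 0 ≤ γ) (E : Multiset (V × V))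
    (σ : V → Bool) : 0 ≤ edgeWeight β γ E σ := by
  refine Multiset.prod_nonneg fun x hx => ?_
  obtain ⟨e, -, rfl⟩ := Multiset.mem_map.mp hx
  exact edgeW_nonneg hβ hγ _ _

theorem edgeWeight_update_of_isolated [DecidableEq V] {E : Multiset (V × V)} {v : V}
    (hv : ∀ e ∈ E, e.1 ≠ v ∧ e.2 ≠ v) (σ : V → Bool) (b : Bool) :
    edgeWeight β γ E (update σ v b) = edgeWeight β γ E σ := by
  refine congrArg Multiset.prod (Multiset.map_congr rfl fun e he => ?_)
  rw [update_of_ne (hv e he).1, update_of_ne (hv e he).2]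

variable [Fintype V]

theorem fieldWeight_nonneg {l : V → ℝ} (hl : ∀ v, 0 ≤ l v) (σ : V → Bool) :
    0 ≤ fieldWeight l σ :=
  prod_nonneg fun v _ => by split_ifs <;> first | exact hl v | exact zero_le_one

theorem fieldWeight_not {l : V → ℝ} (hl : ∀ v, l v ≠ 0) (σ : V → Bool) :
    fieldWeight l (fun v => !σ v) = (∏ v, l v) * fieldWeight l⁻¹ σ := by
  unfold fieldWeight
  rw [← prod_mul_distrib]
  refine prod_congr rfl fun v _ => ?_
  cases hσ : σ v <;> simp [hσ, hl v]

theorem weight_cons (e : V × V) (E : Multiset (V × V)) (l : V → ℝ) (σ : V → Bool) :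
    weight β γ (e ::ₘ E) l σ = edgeW β γ (σ e.1) (σ e.2) * weight β γ E l σ := by
  rw [weight, edgeWeight_cons, mul_assoc, weight]

theorem weight_cons_swap (e : V × V) (E : Multiset (V × V)) (l : V → ℝ) (σ : V → Bool) :
    weight β γ (e.swap ::ₘ E) l σ = weight β γ (e ::ₘ E) l σ := by
  rw [weight_cons, weight_cons, edgeW_comm, Prod.fst_swap, Prod.snd_swap]

variable [DecidableEq V]

theorem fieldWeight_update_mul (l : V → ℝ) (u : V) (c : ℝ) (σ : V → Bool) :
    fieldWeight (update l u (c * l u)) σ = (if σ u then c else 1) * fieldWeight l σ := by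
  have h : (fun v => if σ v then update l u (c * l u) v else 1)
      = update (fun v => if σ v then l v else 1) u (if σ u then c * l u else 1) :=
    funext fun v => apply_update (fun v x => if σ v then x else 1) l u (c * l u) v
  rw [fieldWeight, h, prod_update_of_mem (mem_univ u), sdiff_singleton_eq_erase, fieldWeight,
    ← mul_prod_erase univ _ (mem_univ u)]
  split_ifs <;> ring

theorem fieldWeight_update_spin (l : V → ℝ) {u : V} {σ : V → Bool} (hu : σ u = false) (b : Bool) :
    fieldWeight l (update σ u b) = (if b then l u else 1) * fieldWeight l σ := by
  have h : (fun v => if update σ u b v then l v else 1)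
      = update (fun v => if σ v then l v else 1) u (if b then l u else 1) :=
    funext fun v => apply_update (fun v (x : Bool) => if x then l v else 1) σ u b v
  rw [fieldWeight, h, prod_update_of_mem (mem_univ u), sdiff_singleton_eq_erase, fieldWeight,
    ← mul_prod_erase univ _ (mem_univ u)]
  simp [hu]

theorem weight_update_mul (E : Multiset (V × V)) (l : V → ℝ) (u : V) (c : ℝ) (σ : V → Bool) :
    weight β γ E (update l u (c * l u)) σ = (if σ u then c else 1) * weight β γ E l σ := by
  rw [weight, fieldWeight_update_mul, mul_left_comm, weight]

theorem weight_cons_loop {β : ℝ} (hβ : β ≠ 0) (E : Multiset (V × V)) (l : V → ℝ) (u : V)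
    (σ : V → Bool) :
    weight β γ ((u, u) ::ₘ E) l σ = β * weight β γ E (update l u (γ / β * l u)) σ := by
  rw [weight_cons, weight_update_mul, ← mul_assoc]
  congr 1
  cases σ u <;> simp [edgeW, mul_div_cancel₀, hβ]

end Weights

/-! ### Partition functions with pinned vertices -/

section Partition

variable {V : Type*} [Fintype V] [DecidableEq V] (β γ : ℝ)

/-- The partition function of the multigraph with vertex type `V`, edges `E` and fields `l`. -/
def partitionFunction (E : Multiset (V × V)) (l : V → ℝ) : ℝ :=
  ∑ σ, weight β γ E l σ

/-- The part of the partition function in which the spin of `v` is pinned to `b`. -/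
def pinned (E : Multiset (V × V)) (l : V → ℝ) (v : V) (b : Bool) : ℝ :=
  ∑ σ with σ v = b, weight β γ E l σ

/-- The part of the partition function in which the spins of `v` and `u` are pinned to `b`
and `c`. -/
def pinnedPair (E : Multiset (V × V)) (l : V → ℝ) (v u : V) (b c : Bool) : ℝ :=
  ∑ σ with σ v = b ∧ σ u = c, weight β γ E l σ

theorem pinnedPair_comm (E : Multiset (V × V)) (l : V → ℝ) (v u : V) (b c : Bool) :
    pinnedPair β γ E l v u b c = pinnedPair β γ E l u v c b := by
  simp only [pinnedPair, and_comm]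

theorem sum_weight_update_mul (E : Multiset (V × V)) (l : V → ℝ) (u : V) (c : ℝ)
    (S : Finset (V → Bool)) :
    ∑ σ ∈ S, weight β γ E (update l u (c * l u)) σ
      = ∑ σ ∈ S with σ u = false, weight β γ E l σ
        + c * ∑ σ ∈ S with σ u = true, weight β γ E l σ := by
  rw [sum_eq_sum_filter_false_add_true _ _ u, mul_sum]
  congr 1 <;> refine sum_congr rfl fun σ hσ => ?_ <;>
    simp [weight_update_mul, (mem_filter.mp hσ).2]

theorem partitionFunction_update_mul (E : Multiset (V × V)) (l : V → ℝ) (v : V) (c : ℝ) :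
    partitionFunction β γ E (update l v (c * l v))
      = pinned β γ E l v false + c * pinned β γ E l v true :=
  sum_weight_update_mul β γ E l v c univ

theorem pinned_update_mul (E : Multiset (V × V)) (l : V → ℝ) (v u : V) (b : Bool) (c : ℝ) :
    pinned β γ E (update l u (c * l u)) v b
      = pinnedPair β γ E l v u b false + c * pinnedPair β γ E l v u b true := by
  rw [pinned, sum_weight_update_mul, filter_filter, filter_filter, pinnedPair, pinnedPair]

theorem partitionFunction_eq_pinned_add (E : Multiset (V × V)) (l : V → ℝ) (v : V) :
    partitionFunction β γ E l = pinned β γ E l v false + pinned β γ E l v true := by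
  simpa using partitionFunction_update_mul β γ E l v 1

theorem pinned_false_eq_partitionFunction (E : Multiset (V × V)) (l : V → ℝ) (v : V) :
    pinned β γ E l v false = partitionFunction β γ E (update l v 0) := by
  simpa using (partitionFunction_update_mul β γ E l v 0).symm

theorem pinned_eq_pinnedPair_add (E : Multiset (V × V)) (l : V → ℝ) (v u : V) (b : Bool) :
    pinned β γ E l v b = pinnedPair β γ E l v u b false + pinnedPair β γ E l v u b true := by
  simpa using pinned_update_mul β γ E l v u b 1

theorem pinned_cons (E : Multiset (V × V)) (l : V → ℝ) (v u : V) (b : Bool) :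
    pinned β γ ((v, u) ::ₘ E) l v b
      = edgeW β γ b false * pinnedPair β γ E l v u b false
        + edgeW β γ b true * pinnedPair β γ E l v u b true := by
  rw [pinned_eq_pinnedPair_add _ _ _ _ v u]
  simp only [pinnedPair, mul_sum]
  congr 1 <;> refine sum_congr rfl fun σ hσ => ?_ <;>
    simp only [weight_cons, (mem_filter.mp hσ).2.1, (mem_filter.mp hσ).2.2]

theorem pinned_cons_swap (e : V × V) (E : Multiset (V × V)) (l : V → ℝ) (v : V) (b : Bool) :
    pinned β γ (e.swap ::ₘ E) l v b = pinned β γ (e ::ₘ E) l v b := by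
  simp only [pinned, weight_cons_swap]

theorem pinned_cons_loop {β : ℝ} (hβ : β ≠ 0) (E : Multiset (V × V)) (l : V → ℝ) (u v : V)
    (b : Bool) :
    pinned β γ ((u, u) ::ₘ E) l v b = β * pinned β γ E (update l u (γ / β * l u)) v b := by
  simp only [pinned, weight_cons_loop γ hβ, mul_sum]

theorem pinned_true_of_isolated {E : Multiset (V × V)} {v : V}
    (hv : ∀ e ∈ E, e.1 ≠ v ∧ e.2 ≠ v) (l : V → ℝ) :
    pinned β γ E l v true = l v * pinned β γ E l v false := by
  rw [pinned, sum_filter_eq_sum_filter_update _ v true false, pinned, mul_sum]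
  refine sum_congr rfl fun σ hσ => ?_
  rw [weight, edgeWeight_update_of_isolated β γ hv, fieldWeight_update_spin l (mem_filter.mp hσ).2,
    if_pos rfl, mul_left_comm, weight]

theorem partitionFunction_zero (l : V → ℝ) : partitionFunction β γ 0 l = ∏ v, (1 + l v) := by
  simp [partitionFunction, weight, edgeWeight, fieldWeight, add_comm,
    ← Fintype.prod_sum fun v (b : Bool) => if b then l v else 1]

theorem partitionFunction_flip (E : Multiset (V × V)) {l : V → ℝ} (hl : ∀ v, l v ≠ 0) :
    partitionFunction β γ E l = (∏ v, l v) * partitionFunction γ β E l⁻¹ := by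
  have flip : Involutive fun (σ : V → Bool) v => !σ v := fun σ => by simp
  rw [partitionFunction, ← Equiv.sum_comp flip.toPerm, partitionFunction, mul_sum]
  refine sum_congr rfl fun σ _ => ?_
  rw [Involutive.coe_toPerm, weight, edgeWeight_not, fieldWeight_not hl, mul_left_comm, weight]

theorem partitionFunction_pos_of_nonneg {β γ : ℝ} (hβ : 0 < β) (hγ : 0 ≤ γ)
    (E : Multiset (V × V)) {l : V → ℝ} (hl : ∀ v, 0 ≤ l v) : 0 < partitionFunction β γ E l := by
  refine sum_pos'
    (fun σ _ => mul_nonneg (edgeWeight_nonneg hβ.le hγ E σ) (fieldWeight_nonneg hl σ))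
    ⟨fun _ => false, mem_univ _, ?_⟩
  have h : weight β γ E l (fun _ => false) = β ^ E.card := by
    simp [weight, edgeWeight, fieldWeight, edgeW]
  exact h ▸ pow_pos hβ _

end Partition

/-! ### Contraction of an edge -/

section Contraction

variable {V : Type*} [DecidableEq V]

/-- The edges after merging `u` into `v`. The vertex `u` is kept, as an isolated vertex, so that the
vertex type does not change. -/
def contractEdges (v u : V) (E : Multiset (V × V)) : Multiset (V × V) :=
  E.map (Prod.map (update id u v) (update id u v))

/-- The fields after merging `u` into `v`: the field at `v` becomes the product of both fields, and
the field `0` at the leftover vertex `u` forces its spin to be `0`. -/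
def contractFields (v u : V) (l : V → ℝ) : V → ℝ :=
  update (update l v (l u * l v)) u 0

theorem weight_contract [Fintype V] (β γ : ℝ) (E : Multiset (V × V)) (l : V → ℝ) (v u : V)
    (σ : V → Bool) :
    weight β γ (contractEdges v u E) (contractFields v u l) σ
      = if σ u = false then weight β γ E l (update σ u (σ v)) else 0 := by
  have hcomp : σ ∘ update id u v = update σ u (σ v) := by rw [comp_update, comp_id]
  have hfield : fieldWeight (contractFields v u l) σ
      = (if σ u then 0 else 1) * ((if σ v then l u else 1) * fieldWeight l σ) := by
    rw [← fieldWeight_update_mul, ← fieldWeight_update_mul, zero_mul, contractFields]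
  rw [weight, contractEdges, edgeWeight_map, hcomp, hfield]
  cases hu : σ u
  · simp [weight, fieldWeight_update_spin l hu]
  · simp

theorem pinned_contract [Fintype V] (β γ : ℝ) (E : Multiset (V × V)) (l : V → ℝ) {v u : V}
    (hvu : v ≠ u) (b : Bool) :
    pinned β γ (contractEdges v u E) (contractFields v u l) v b = pinnedPair β γ E l v u b b := by
  calc ∑ σ with σ v = b, weight β γ (contractEdges v u E) (contractFields v u l) σ
      = ∑ σ with σ v = b ∧ σ u = false, weight β γ E l (update σ u (σ v)) := by
        simp only [weight_contract β γ E l v u, ← sum_filter, filter_filter]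
    _ = ∑ σ with σ u = false,
          if update σ u b v = b then weight β γ E l (update σ u b) else 0 := by
        rw [← sum_filter, filter_filter]
        simp only [update_of_ne hvu, and_comm]
        exact sum_congr rfl fun σ hσ => by rw [(mem_filter.mp hσ).2.1]
    _ = ∑ σ with σ u = b, if σ v = b then weight β γ E l σ else 0 :=
        (sum_filter_eq_sum_filter_update (fun σ => if σ v = b then weight β γ E l σ else 0)
          u b false).symm
    _ = pinnedPair β γ E l v u b b := by
        rw [← sum_filter, filter_filter, pinnedPair_comm, pinnedPair]

end Contraction

/-! ### Fields and ratios in the interval `[γ / (1 - γ), 1]` -/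

section Ratio

/-- The lower end of the interval `[minField γ, 1]` that contains the external fields and, by
induction on the edges, the ratios `Z₁ / Z₀` of pinned partition functions. -/
noncomputable def minField (γ : ℝ) : ℝ := γ / (1 - γ)

/-- `z₀` is positive and the ratio `z₁ / z₀` lies in `[a, 1]`. -/
structure RatioBounded (a z₀ z₁ : ℝ) : Prop where
  pos : 0 < z₀
  lower : a * z₀ ≤ z₁
  upper : z₁ ≤ z₀

variable {a β γ z₀ z₁ : ℝ}

theorem minField_mul (hγ : γ < 0) : minField γ * (1 - γ) = γ :=
  div_mul_cancel₀ γ (by linarith)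

theorem minField_neg (hγ : γ < 0) : minField γ < 0 :=
  div_neg_of_neg_of_pos hγ (by linarith)

theorem neg_one_lt_minField (hγ : γ < 0) : -1 < minField γ := by
  rw [minField, lt_div_iff₀ (by linarith)]
  linarith

theorem RatioBounded.add_pos (h : RatioBounded a z₀ z₁) (ha : -1 < a) : 0 < z₀ + z₁ := by
  calc 0 < (1 + a) * z₀ := mul_pos (by linarith) h.pos
    _ = z₀ + a * z₀ := by ring
    _ ≤ z₀ + z₁ := by gcongr; exact h.lower

theorem RatioBounded.mul_left (h : RatioBounded a z₀ z₁) {c : ℝ} (hc : 0 < c) :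
    RatioBounded a (c * z₀) (c * z₁) where
  pos := mul_pos hc h.pos
  lower := by
    rw [mul_left_comm]
    exact mul_le_mul_of_nonneg_left h.lower hc.le
  upper := mul_le_mul_of_nonneg_left h.upper hc.le

theorem RatioBounded.of_mem_Icc {c z : ℝ} (hz : 0 < z) (hc : c ∈ Set.Icc a 1) :
    RatioBounded a z (c * z) where
  pos := hz
  lower := mul_le_mul_of_nonneg_right hc.1 hz.le
  upper := mul_le_of_le_one_left hz.le hc.2

theorem mul_mem_Icc_of_nonpos {c d : ℝ} (ha : -1 ≤ a) (ha' : a ≤ 0) (hc : c ∈ Set.Icc a 1)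
    (hd : d ∈ Set.Icc a 1) : c * d ∈ Set.Icc a 1 := by
  have hc' : |c| ≤ 1 := abs_le.mpr ⟨ha.trans hc.1, hc.2⟩
  have hd' : |d| ≤ 1 := abs_le.mpr ⟨ha.trans hd.1, hd.2⟩
  constructor
  · obtain hd₀ | hd₀ := le_total 0 d
    · calc a ≤ a * d := le_mul_of_le_one_right ha' hd.2
        _ ≤ c * d := mul_le_mul_of_nonneg_right hc.1 hd₀
    · exact hd.1.trans (le_mul_of_le_one_left hd₀ hc.2)
  · calc c * d ≤ |c * d| := le_abs_self _
      _ = |c| * |d| := abs_mul c d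
      _ ≤ 1 := mul_le_one₀ hc' (abs_nonneg d) hd'

theorem lower_bound_of_edge {f₀₀ f₀₁ f₁₀ f₁₁ : ℝ} (hγ : γ < 0)
    (hu : minField γ * (f₀₀ + minField γ * f₀₁) ≤ f₁₀ + minField γ * f₁₁)
    (hv : minField γ * (f₀₀ + minField γ * f₁₀) ≤ f₀₁ + minField γ * f₁₁) :
    minField γ * ((1 - γ) * f₀₀ + f₀₁) ≤ f₁₀ + γ * f₁₁ := by
  have hmul := minField_mul hγ
  have hneg := minField_neg hγ
  have hgt := neg_one_lt_minField hγ
  set a := minField γ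
  -- The multipliers are determined by comparing the coefficients of `f₀₁` and `f₁₀`.
  have hcomb : (1 + a) * (1 + a ^ 2) * (a * ((1 - γ) * f₀₀ + f₀₁) - (f₁₀ + γ * f₁₁))
      = (1 + a + a ^ 2) * (a * (f₀₀ + a * f₀₁) - (f₁₀ + a * f₁₁))
        + -a * (a * (f₀₀ + a * f₁₀) - (f₀₁ + a * f₁₁)) := by
    linear_combination (1 + a ^ 2) * ((1 + a) * f₀₀ - (f₀₀ - f₁₁)) * hmul
  have hpos : 0 < (1 + a) * (1 + a ^ 2) := mul_pos (by linarith) (by positivity)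
  refine sub_nonpos.mp (nonpos_of_mul_nonpos_right (hcomb.trans_le ?_) hpos)
  exact add_nonpos
    (mul_nonpos_of_nonneg_of_nonpos (add_nonneg (by linarith) (sq_nonneg a)) (sub_nonpos.mpr hu))
    (mul_nonpos_of_nonneg_of_nonpos (by linarith) (sub_nonpos.mpr hv))

theorem RatioBounded.of_edge {f₀₀ f₀₁ f₁₀ f₁₁ : ℝ} (hγ : γ < 0) (hβ : 1 - γ ≤ β)
    (hdel : RatioBounded (minField γ) (f₀₀ + f₀₁) (f₁₀ + f₁₁))
    (hcon : RatioBounded (minField γ) f₀₀ f₁₁)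
    (hu : RatioBounded (minField γ) (f₀₀ + minField γ * f₀₁) (f₁₀ + minField γ * f₁₁))
    (hv : RatioBounded (minField γ) (f₀₀ + minField γ * f₁₀) (f₀₁ + minField γ * f₁₁)) :
    RatioBounded (minField γ) (β * f₀₀ + f₀₁) (f₁₀ + γ * f₁₁) := by
  have hβf : (1 - γ) * f₀₀ ≤ β * f₀₀ := mul_le_mul_of_nonneg_right hβ hcon.pos.le
  have h₁₁ : γ * f₀₀ ≤ (1 - γ) * f₁₁ := by
    calc γ * f₀₀ = (1 - γ) * (minField γ * f₀₀) := by linear_combination -f₀₀ * minField_mul hγ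
      _ ≤ (1 - γ) * f₁₁ := mul_le_mul_of_nonneg_left hcon.lower (by linarith)
  constructor
  case pos =>
    have hneg : γ * f₀₀ < 0 := mul_neg_of_neg_of_pos hγ hcon.pos
    linarith [hdel.pos]
  case lower =>
    calc minField γ * (β * f₀₀ + f₀₁) ≤ minField γ * ((1 - γ) * f₀₀ + f₀₁) :=
          mul_le_mul_of_nonpos_left (by linarith) (minField_neg hγ).le
      _ ≤ f₁₀ + γ * f₁₁ := lower_bound_of_edge hγ hu.lower hv.lower
  case upper => linarith [hdel.upper]

end Ratio

/-! ### Induction on the number of edges -/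

section Induction

variable {V : Type*} {β γ : ℝ}

/-- All external fields lie in the interval `[minField γ, 1]`. -/
def Admissible (γ : ℝ) (l : V → ℝ) : Prop := ∀ v, l v ∈ Set.Icc (minField γ) 1

theorem minField_mem_Icc (hγ : γ < 0) : minField γ ∈ Set.Icc (minField γ) 1 :=
  ⟨le_rfl, by linarith [minField_neg hγ]⟩

theorem zero_mem_Icc_minField (hγ : γ < 0) : (0 : ℝ) ∈ Set.Icc (minField γ) 1 :=
  ⟨(minField_neg hγ).le, zero_le_one⟩

theorem div_mem_Icc_minField (hγ : γ < 0) (hβ : 1 - γ ≤ β) : γ / β ∈ Set.Icc (minField γ) 1 := by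
  have hβ₀ : 0 < β := by linarith
  constructor
  · rw [minField, div_le_div_iff₀ (by linarith) hβ₀]
    exact mul_le_mul_of_nonpos_left hβ hγ.le
  · rw [div_le_one hβ₀]
    linarith

variable [DecidableEq V]

theorem Admissible.update {l : V → ℝ} (hl : Admissible γ l) (u : V) {c : ℝ}
    (hc : c ∈ Set.Icc (minField γ) 1) : Admissible γ (update l u c) :=
  (forall_update_iff l fun _ x => x ∈ Set.Icc (minField γ) 1).mpr ⟨hc, fun v _ => hl v⟩

theorem Admissible.update_mul {l : V → ℝ} (hl : Admissible γ l) (hγ : γ < 0) (u v : V) {c : ℝ}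
    (hc : c ∈ Set.Icc (minField γ) 1) : Admissible γ (Function.update l u (c * l v)) :=
  hl.update u (mul_mem_Icc_of_nonpos (neg_one_lt_minField hγ).le (minField_neg hγ).le hc (hl v))

theorem Admissible.contractFields {l : V → ℝ} (hl : Admissible γ l) (hγ : γ < 0) (v u : V) :
    Admissible γ (contractFields v u l) :=
  (hl.update_mul hγ v v (hl u)).update u (zero_mem_Icc_minField hγ)

variable [Fintype V]

/-- The induction invariant: for admissible fields and every pinned vertex the ratio of the pinned
partition functions lies in `[minField γ, 1]`. -/
def HasBoundedRatios (β γ : ℝ) (E : Multiset (V × V)) : Prop :=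
  ∀ l : V → ℝ, Admissible γ l → ∀ v,
    RatioBounded (minField γ) (pinned β γ E l v false) (pinned β γ E l v true)

theorem HasBoundedRatios.cons_loop (hγ : γ < 0) (hβ : 1 - γ ≤ β) {E : Multiset (V × V)}
    (hE : HasBoundedRatios β γ E) (u : V) : HasBoundedRatios β γ ((u, u) ::ₘ E) := by
  intro l hl v
  have hβ₀ : 0 < β := by linarith
  rw [pinned_cons_loop γ hβ₀.ne', pinned_cons_loop γ hβ₀.ne']
  exact (hE _ (hl.update_mul hγ u u (div_mem_Icc_minField hγ hβ)) v).mul_left hβ₀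

theorem ratioBounded_pinned_cons (hγ : γ < 0) (hβ : 1 - γ ≤ β) {E : Multiset (V × V)} {v u : V}
    (hvu : v ≠ u) (hE : HasBoundedRatios β γ E) (hcon : HasBoundedRatios β γ (contractEdges v u E))
    {l : V → ℝ} (hl : Admissible γ l) :
    RatioBounded (minField γ) (pinned β γ ((v, u) ::ₘ E) l v false)
      (pinned β γ ((v, u) ::ₘ E) l v true) := by
  have del := hE l hl v
  have contracted := hcon _ (hl.contractFields hγ v u) v
  have scaled_u := hE _ (hl.update_mul hγ u u (minField_mem_Icc hγ)) v
  have scaled_v := hE _ (hl.update_mul hγ v v (minField_mem_Icc hγ)) u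
  simp only [pinned_eq_pinnedPair_add β γ E l v u] at del
  simp only [pinned_contract β γ E l hvu] at contracted
  simp only [pinned_update_mul] at scaled_u scaled_v
  simp only [pinnedPair_comm β γ E l u v] at scaled_v
  simpa [pinned_cons, edgeW] using RatioBounded.of_edge hγ hβ del contracted scaled_u scaled_v

theorem ratioBounded_pinned_of_incident (hγ : γ < 0) (hβ : 1 - γ ≤ β) {E : Multiset (V × V)}
    (ih : ∀ E' : Multiset (V × V), E'.card < E.card → HasBoundedRatios β γ E') {l : V → ℝ}
    (hl : Admissible γ l) {e : V × V} (he : e ∈ E) {v : V} (hv : e.1 = v ∨ e.2 = v) :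
    RatioBounded (minField γ) (pinned β γ E l v false) (pinned β γ E l v true) := by
  obtain ⟨E, rfl⟩ := Multiset.exists_cons_of_mem he
  have hdel : HasBoundedRatios β γ E := ih E (by simp)
  have hcon (x y : V) : HasBoundedRatios β γ (contractEdges x y E) :=
    ih _ (by simp [contractEdges])
  obtain ⟨x, y⟩ := e
  obtain rfl | hxy := eq_or_ne x y
  · exact hdel.cons_loop hγ hβ x l hl v
  obtain rfl | rfl := hv
  · exact ratioBounded_pinned_cons hγ hβ hxy hdel (hcon _ _) hl
  · simp only [← pinned_cons_swap β γ (x, y)]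
    exact ratioBounded_pinned_cons hγ hβ hxy.symm hdel (hcon _ _) hl

theorem partitionFunction_zero_pos {l : V → ℝ} (hl : ∀ v, -1 < l v) :
    0 < partitionFunction β γ 0 l := by
  rw [partitionFunction_zero]
  exact prod_pos fun v _ => by linarith [hl v]

theorem partitionFunction_pos_of_forall_card_lt (hγ : γ < 0) (hβ : 1 - γ ≤ β)
    {E : Multiset (V × V)}
    (ih : ∀ E' : Multiset (V × V), E'.card < E.card → HasBoundedRatios β γ E') {l : V → ℝ}
    (hl : Admissible γ l) : 0 < partitionFunction β γ E l := by
  obtain rfl | ⟨e, he⟩ := E.empty_or_exists_mem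
  · exact partitionFunction_zero_pos fun v => (neg_one_lt_minField hγ).trans_le (hl v).1
  · rw [partitionFunction_eq_pinned_add β γ E l e.1]
    exact (ratioBounded_pinned_of_incident hγ hβ ih hl he (Or.inl rfl)).add_pos
      (neg_one_lt_minField hγ)

theorem hasBoundedRatios (hγ : γ < 0) (hβ : 1 - γ ≤ β) (E : Multiset (V × V)) :
    HasBoundedRatios β γ E := by
  induction hn : E.card using Nat.strong_induction_on generalizing E with
  | _ n ih =>
    subst hn
    have ih (E' : Multiset (V × V)) (h : E'.card < E.card) := ih _ h E' rfl
    intro l hl v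
    by_cases hv : ∃ e ∈ E, e.1 = v ∨ e.2 = v
    · obtain ⟨e, he, hev⟩ := hv
      exact ratioBounded_pinned_of_incident hγ hβ ih hl he hev
    · push Not at hv
      rw [pinned_true_of_isolated β γ hv]
      refine RatioBounded.of_mem_Icc ?_ (hl v)
      rw [pinned_false_eq_partitionFunction]
      exact partitionFunction_pos_of_forall_card_lt hγ hβ ih
        (hl.update v (zero_mem_Icc_minField hγ))

theorem partitionFunction_pos_of_admissible (hγ : γ < 0) (hβ : 1 - γ ≤ β) (E : Multiset (V × V))
    {l : V → ℝ} (hl : Admissible γ l) : 0 < partitionFunction β γ E l :=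
  partitionFunction_pos_of_forall_card_lt hγ hβ (fun E' _ => hasBoundedRatios hγ hβ E') hl

theorem partitionFunction_pos_of_pos (h : 1 ≤ β + γ) (hβ : 0 < β) (E : Multiset (V × V))
    {l : V → ℝ} (hl : ∀ v, 0 ≤ l v) (hl₁ : γ < 0 → ∀ v, l v ≤ 1) :
    0 < partitionFunction β γ E l := by
  obtain hγ | hγ := lt_or_ge γ 0
  · exact partitionFunction_pos_of_admissible hγ (by linarith) E fun v =>
      ⟨(minField_neg hγ).le.trans (hl v), hl₁ hγ v⟩
  · exact partitionFunction_pos_of_nonneg hβ hγ E hl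

end Induction

end TwoSpin

open TwoSpin in
theorem stmt0_general {V : Type*} [Fintype V] [DecidableEq V] {β γ : ℝ} (h : 1 ≤ β + γ)
    (E : Multiset (V × V)) {l : V → ℝ} (hl : ∀ v, 0 ≤ l v) (hγ : γ < 0 → ∀ v, l v ≤ 1)
    (hβ : β ≤ 0 → ∀ v, 1 ≤ l v) : 0 < partitionFunction β γ E l := by
  obtain hβ₀ | hβ₀ := lt_or_ge 0 β
  · exact partitionFunction_pos_of_pos h hβ₀ E hl hγ
  · have hpos (v : V) : 0 < l v := zero_lt_one.trans_le (hβ hβ₀ v)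
    rw [partitionFunction_flip β γ E fun v => (hpos v).ne']
    refine mul_pos (Finset.prod_pos fun v _ => hpos v) (partitionFunction_pos_of_pos
      (by linarith) (by linarith) E (fun v => (inv_pos.mpr (hpos v)).le)
      fun _ v => inv_le_one_of_one_le₀ (hβ hβ₀ v))

/-- If `β + γ ≥ 1` then for every graph `G` the partition function `Z_G`
(with all external fields equal to `1`) is strictly positive. -/
theorem stmt0 (β γ : ℝ) (h : 1 ≤ β + γ) (G : MultiGraph) :
    0 < ZR β γ G (fun _ => 1) :=
  stmt0_general h G.edges (fun _ => zero_le_one) (fun _ _ => le_rfl) fun _ _ => le_rfl
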